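/- The 5-rank of the Hermitian unital design of order 4 — the 2-(65,5,1) design whose points are the 65 points of H = { [x : y : z] ∈ PG(2,16) : x⁵ + y⁵ + z⁵ = 0 } and whose blocks are the intersections H ∩ ℓ over lines ℓ of PG(2,16) meeting H in 5 points — is exactly 52; that is, the block–point incidence matrix of this design has rank 52 over the field GF(5). -/

import Mathlib

noncomputable section

/-- The field `GF(16)` of 16 elements. -/
abbrev K16 := GaloisField 2 4

/-- The 3-dimensional vector space over `GF(16)`. -/
abbrev V16 := Fin 3 → K16

/-- The point set of the Desarguesian projective plane `PG(2,16)`: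
1-dimensional subspaces of the 3-dimensional vector space over `GF(16)`. -/
abbrev PG216 := Projectivization K16 V16

/-- The Hermitian set `H = { [x : y : z] ∈ PG(2,16) : x⁵ + y⁵ + z⁵ = 0 }`.
(The defining condition is invariant under scalar multiplication, so it may be
evaluated on the chosen representative of each point.) -/
def HermitianSet : Set PG216 :=
  {p | p.rep 0 ^ 5 + p.rep 1 ^ 5 + p.rep 2 ^ 5 = 0}
/-- The blocks of the Hermitian unital design: intersections of the Hermitian set with
lines of `PG(2,16)` meeting it in 5 points, viewed as subsets of the Hermitian set. -/
def hermitianBlocks : Set (Set ↥HermitianSet) :=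
  {b | ∃ W : Submodule K16 V16, Module.finrank K16 W = 2 ∧
        b = {x : ↥HermitianSet | x.1.submodule ≤ W} ∧ b.ncard = 5}

instance : Finite PG216 := Quotient.finite _

noncomputable instance : Fintype ↥HermitianSet := Fintype.ofFinite _

/-- The block–point incidence matrix of the Hermitian unital design, with entries in
`GF(5)`: rows are indexed by blocks, columns by points, and the `(B, x)` entry is `1`
if `x ∈ B` and `0` otherwise. -/
def hermitianIncidenceMatrix : Matrix ↥hermitianBlocks ↥HermitianSet (ZMod 5) :=
  fun B x => Set.indicator B.1 (fun _ => 1) x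

/-!
The group `GF(16)ˣ` is the direct product of the cube roots and the fifth roots of unity, and fifth
powers only see the first factor. In terms of the logarithms `ZMod 3 × ZMod 5` of the coordinates,
the unital therefore consists of five points on each side of the triangle of reference and of two
copies of the affine plane `ZMod 5 × ZMod 5` off the triangle, and the three-term relations of
`GF(16)` turn a block into a condition on sums of values at translates `q + t`.

The `5`-rank is `65` minus the dimension of the dual code. For a dual word, the generic blocks force
the second differences along the three sides to add up to zero, and for words vanishing on the sides
they make the three second differences along fixed directions of the affine plane agree. Both
systems are solved by taking first differences and using that a function on `ZMod 5 × ZMod 5` with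
two independent periods is constant; so `13` values determine a dual word. Conversely, polynomials
of degree at most `5` in the logarithms give `13` independent dual words, and `65 - 13 = 52`.
-/

/-! ### The multiplicative group of `GF(16)` -/

lemma natCard_K16 : Nat.card K16 = 16 := GaloisField.card 2 4 four_ne_zero

lemma natCard_units_K16 : Nat.card K16ˣ = 15 := by rw [Nat.card_units, natCard_K16]

lemma exists_isPrimitiveRoot_five : ∃ ζ : K16, IsPrimitiveRoot ζ 5 := by
  have : Fact (Nat.Prime 5) := ⟨Nat.prime_five⟩
  obtain ⟨u, hu⟩ := exists_prime_orderOf_dvd_card' (G := K16ˣ) 5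
    (by rw [natCard_units_K16]; norm_num)
  exact ⟨u, IsPrimitiveRoot.coe_units_iff.mpr (hu ▸ IsPrimitiveRoot.orderOf u)⟩

/-- A chosen primitive fifth root of unity of `GF(16)`. -/
def zeta : K16 := exists_isPrimitiveRoot_five.choose

lemma zeta_isPrimitiveRoot : IsPrimitiveRoot zeta 5 := exists_isPrimitiveRoot_five.choose_spec

lemma zeta_pow_five : zeta ^ 5 = 1 := zeta_isPrimitiveRoot.pow_eq_one

lemma zeta_cyclotomic : 1 + zeta + zeta ^ 2 + zeta ^ 3 + zeta ^ 4 = 0 := by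
  simpa [Finset.sum_range_succ] using zeta_isPrimitiveRoot.geom_sum_eq_zero (by norm_num)

/-- The primitive cube root of unity `ζ + ζ⁻¹` of `GF(16)`. -/
def omega : K16 := zeta + zeta ^ 4

lemma two_eq_zero_K16 : (2 : K16) = 0 := CharTwo.two_eq_zero

lemma omega_sq_add_omega_add_one : omega ^ 2 + omega + 1 = 0 := by
  have h := zeta_cyclotomic
  have h5 := zeta_pow_five
  have h2 := two_eq_zero_K16
  unfold omega
  linear_combination h + (zeta ^ 3 + 2) * h5 + h2

lemma omega_isPrimitiveRoot : IsPrimitiveRoot omega 3 := by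
  have pow_three : omega ^ 3 = 1 := by
    linear_combination (omega - 1) * omega_sq_add_omega_add_one
  have ne_one : omega ≠ 1 := fun h => by
    have := omega_sq_add_omega_add_one
    rw [h] at this
    exact one_ne_zero (by linear_combination this - two_eq_zero_K16)
  exact orderOf_eq_prime pow_three ne_one ▸ IsPrimitiveRoot.orderOf omega

/-- `GF(16)ˣ` is the direct product of the groups of cube and of fifth roots of unity;
`ofLog (e, i) = ω ^ e * ζ ^ i` parametrises it by exponents. -/
def ofLog (a : ZMod 3 × ZMod 5) : K16 := omega ^ a.1.val * zeta ^ a.2.val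

lemma pow_val_add {M : Type*} [Monoid M] {n : ℕ} [NeZero n] {x : M} (hx : x ^ n = 1)
    (a b : ZMod n) : x ^ (a + b).val = x ^ a.val * x ^ b.val := by
  rw [ZMod.val_add, ← pow_eq_pow_mod _ hx, pow_add]

lemma ofLog_zero : ofLog 0 = 1 := by simp [ofLog]

lemma ofLog_add (a b : ZMod 3 × ZMod 5) : ofLog (a + b) = ofLog a * ofLog b := by
  simp only [ofLog, Prod.fst_add, Prod.snd_add, pow_val_add omega_isPrimitiveRoot.pow_eq_one,
    pow_val_add zeta_pow_five]
  ring

lemma ofLog_ne_zero (a : ZMod 3 × ZMod 5) : ofLog a ≠ 0 := fun h =>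
  one_ne_zero (by rw [← ofLog_zero, ← add_neg_cancel a, ofLog_add, h, zero_mul])

lemma ofLog_pow_six (a : ZMod 3 × ZMod 5) : ofLog a ^ 6 = zeta ^ a.2.val := by
  rw [ofLog, mul_pow, ← pow_mul, ← pow_mul, pow_mul' _ _ 6, pow_mul' _ _ 6,
    show omega ^ 6 = 1 by rw [pow_mul omega 3 2, omega_isPrimitiveRoot.pow_eq_one, one_pow],
    show zeta ^ 6 = zeta by rw [pow_succ, zeta_pow_five, one_mul], one_pow, one_mul]

lemma ofLog_pow_ten (a : ZMod 3 × ZMod 5) : ofLog a ^ 10 = omega ^ a.1.val := by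
  rw [ofLog, mul_pow, ← pow_mul, ← pow_mul, pow_mul' _ _ 10, pow_mul' _ _ 10,
    show omega ^ 10 = omega by
      rw [pow_succ, pow_mul omega 3 3, omega_isPrimitiveRoot.pow_eq_one, one_pow, one_mul],
    show zeta ^ 10 = 1 by rw [pow_mul zeta 5 2, zeta_pow_five, one_pow], one_pow, mul_one]

lemma ofLog_injective : Function.Injective ofLog := fun a b h => by
  refine Prod.ext (ZMod.val_injective 3 ?_) (ZMod.val_injective 5 ?_)
  · refine omega_isPrimitiveRoot.pow_inj a.1.val_lt b.1.val_lt ?_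
    rw [← ofLog_pow_ten, ← ofLog_pow_ten, h]
  · refine zeta_isPrimitiveRoot.pow_inj a.2.val_lt b.2.val_lt ?_
    rw [← ofLog_pow_six, ← ofLog_pow_six, h]

lemma exists_ofLog_eq {x : K16} (hx : x ≠ 0) : ∃ a, ofLog a = x := by
  have pow_fifteen : x ^ 15 = 1 := by
    simpa [Units.ext_iff, natCard_units_K16] using pow_card_eq_one' (x := Units.mk0 x hx)
  obtain ⟨e, he, hωe⟩ := omega_isPrimitiveRoot.eq_pow_of_pow_eq_one
    (ξ := x ^ 10) (by rw [← pow_mul, pow_mul x 15 2, pow_fifteen, one_pow])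
  obtain ⟨i, hi, hζi⟩ := zeta_isPrimitiveRoot.eq_pow_of_pow_eq_one
    (ξ := x ^ 6) (by rw [← pow_mul, pow_mul x 15 2, pow_fifteen, one_pow])
  refine ⟨(e, i), ?_⟩
  rw [ofLog, ZMod.val_natCast_of_lt he, ZMod.val_natCast_of_lt hi, hωe, hζi, ← pow_add,
    pow_succ, pow_fifteen, one_mul]

lemma ofLog_pow_five (a : ZMod 3 × ZMod 5) : ofLog a ^ 5 = ofLog (-a.1, 0) := by
  have five_nsmul : a + a + a + a + a = (-a.1, 0) :=
    (by decide : ∀ a : ZMod 3 × ZMod 5, a + a + a + a + a = (-a.1, 0)) a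
  rw [← five_nsmul]
  simp only [ofLog_add]
  ring

lemma ofLog_add_ofLog_eq_zero {a b : ZMod 3 × ZMod 5} : ofLog a + ofLog b = 0 ↔ a = b :=
  CharTwo.add_eq_zero.trans ofLog_injective.eq_iff

/-- The pairs `(i, j)` for which `1 + ω ^ e * ζ ^ i + ω ^ e' * ζ ^ j = 0` in `GF(16)`. -/
def trinomialLogs : ZMod 3 → ZMod 3 → Finset (ZMod 5 × ZMod 5)
  | 0, 0 => ∅
  | 0, 1 => {(2, 1), (-2, -1)}
  | 0, 2 => {(4, 2), (-4, -2)}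
  | 1, 0 => {(1, 2), (-1, -2)}
  | 1, 1 => {(2, -2), (-2, 2)}
  | 1, 2 => {0}
  | 2, 0 => {(2, 4), (-2, -4)}
  | 2, 1 => {0}
  | 2, 2 => {(1, -1), (-1, 1)}

lemma one_add_ofLog_add_ofLog_of_mem {e e' : ZMod 3} {t : ZMod 5 × ZMod 5}
    (ht : t ∈ trinomialLogs e e') : 1 + ofLog (e, t.1) + ofLog (e', t.2) = 0 := by
  have cases_three : ∀ e : ZMod 3, e = 0 ∨ e = 1 ∨ e = 2 := by decide
  obtain rfl | rfl | rfl := cases_three e <;> obtain rfl | rfl | rfl := cases_three e' <;>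
    simp only [trinomialLogs, Finset.mem_insert, Finset.mem_singleton,
      Finset.notMem_empty] at ht <;>
    obtain rfl | rfl := ht <;>
    simp +decide only [ofLog, omega, ZMod.neg_val, ZMod.val_ofNat, ZMod.val_one'', ZMod.val_zero,
      Prod.fst_zero, Prod.snd_zero, if_false, Nat.reduceMod, Nat.reduceSub] <;>
    grind [zeta_cyclotomic, zeta_pow_five, two_eq_zero_K16]

lemma mem_trinomialLogs_iff {e e' : ZMod 3} {t : ZMod 5 × ZMod 5} :
    t ∈ trinomialLogs e e' ↔ 1 + ofLog (e, t.1) + ofLog (e', t.2) = 0 := by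
  refine ⟨one_add_ofLog_add_ofLog_of_mem, fun h => ?_⟩
  have ne_zero : (e, t.1) ≠ 0 := fun h0 => ofLog_ne_zero (e', t.2) <| by
    rw [h0, ofLog_zero] at h
    linear_combination h - two_eq_zero_K16
  obtain ⟨e'', t', ht', fst_eq⟩ : ∃ e'', ∃ t' ∈ trinomialLogs e e'', t'.1 = t.1 :=
    (by decide : ∀ e i, (e, i) ≠ 0 → ∃ e'', ∃ t' ∈ trinomialLogs e e'', t'.1 = i) e t.1 ne_zero
  have h' := one_add_ofLog_add_ofLog_of_mem ht'
  rw [fst_eq] at h'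
  obtain ⟨rfl, snd_eq⟩ := Prod.mk.inj (ofLog_injective (add_left_cancel (h'.trans h.symm)))
  rwa [← Prod.ext fst_eq snd_eq]

/-! ### Points -/

/-- Index type of the 65 points of the Hermitian set. `Sum.inl (k, i)` is the `i`-th point on the
side `x_k = 0` of the triangle of reference; `Sum.inr (ε, p)` is the point
`[1 : ω ^ ε * ζ ^ p.1 : ω ^ (-ε) * ζ ^ p.2]` off the triangle. -/
abbrev PointCode := Fin 3 × ZMod 5 ⊕ ℤˣ × ZMod 5 × ZMod 5

/-- The normalised homogeneous coordinates of the point with a given index. -/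
def pointCoords : PointCode → V16
  | .inl (0, i) => ![0, 1, ofLog (0, i)]
  | .inl (1, i) => ![1, 0, ofLog (0, -i)]
  | .inl (2, i) => ![1, ofLog (0, i), 0]
  | .inr (ε, p) => ![1, ofLog (ε, p.1), ofLog (-ε, p.2)]

lemma pointCoords_ne_zero (x : PointCode) : pointCoords x ≠ 0 := by
  obtain ⟨k, i⟩ | ⟨ε, p⟩ := x
  · fin_cases k <;> simp [pointCoords]
  · simp [pointCoords]

lemma mk_mem_HermitianSet_iff {v : V16} (hv : v ≠ 0) :
    Projectivization.mk K16 v hv ∈ HermitianSet ↔ v 0 ^ 5 + v 1 ^ 5 + v 2 ^ 5 = 0 := by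
  obtain ⟨a, ha⟩ := Projectivization.exists_smul_eq_mk_rep K16 v hv
  have scale : (a • v) 0 ^ 5 + (a • v) 1 ^ 5 + (a • v) 2 ^ 5
      = (a : K16) ^ 5 * (v 0 ^ 5 + v 1 ^ 5 + v 2 ^ 5) := by
    simp only [Units.smul_def, Pi.smul_apply, smul_eq_mul]
    ring
  rw [HermitianSet, Set.mem_ofPred_eq, ← ha, scale, mul_eq_zero,
    or_iff_right (pow_ne_zero _ a.ne_zero)]

lemma one_add_ofLog_pow_five_eq_zero_iff {a : ZMod 3 × ZMod 5} :
    1 + ofLog a ^ 5 = 0 ↔ a.1 = 0 := by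
  rw [ofLog_pow_five, ← ofLog_zero, ofLog_add_ofLog_eq_zero, Prod.ext_iff]
  simp [eq_comm]

lemma one_add_ofLog_pow_five_add_eq_zero_iff {a b : ZMod 3 × ZMod 5} :
    1 + ofLog a ^ 5 + ofLog b ^ 5 = 0 ↔ ∃ ε : ℤˣ, a.1 = ε ∧ b.1 = -ε := by
  rw [ofLog_pow_five, ofLog_pow_five,
    ← mem_trinomialLogs_iff (t := (0, 0))]
  generalize a.1 = e, b.1 = e'
  revert e e'
  decide

lemma pointCoords_mem (x : PointCode) :
    pointCoords x 0 ^ 5 + pointCoords x 1 ^ 5 + pointCoords x 2 ^ 5 = 0 := by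
  obtain ⟨k, i⟩ | ⟨ε, p⟩ := x
  · fin_cases k <;> simp [pointCoords, one_add_ofLog_pow_five_eq_zero_iff]
  · simpa [pointCoords] using one_add_ofLog_pow_five_add_eq_zero_iff.mpr ⟨ε, rfl, rfl⟩

/-- The point of the Hermitian set with a given index. -/
def unitalPoint (x : PointCode) : ↥HermitianSet :=
  ⟨Projectivization.mk K16 (pointCoords x) (pointCoords_ne_zero x),
    (mk_mem_HermitianSet_iff _).mpr (pointCoords_mem x)⟩

lemma intCast_units_inj : ∀ {ε ε' : ℤˣ}, (ε : ZMod 3) = ε' ↔ ε = ε' := by decide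

lemma eq_of_smul_pointCoords_eq {x y : PointCode} {c : K16}
    (h : c • pointCoords x = pointCoords y) : x = y := by
  obtain ⟨k, i⟩ | ⟨ε, p⟩ := x <;> obtain ⟨k', i'⟩ | ⟨ε', p'⟩ := y
  · fin_cases k <;> fin_cases k' <;> simp [pointCoords] at h <;>
      grind [ofLog_ne_zero, ofLog_injective.eq_iff]
  · fin_cases k <;> simp [pointCoords] at h <;> grind [ofLog_ne_zero]
  · fin_cases k' <;> simp [pointCoords] at h <;> grind [ofLog_ne_zero]
  · obtain ⟨rfl, h₁, h₂⟩ : c = 1 ∧ _ ∧ _ := by simpa [pointCoords] using h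
    rw [one_mul, ofLog_injective.eq_iff, Prod.ext_iff] at h₁ h₂
    exact congrArg Sum.inr (Prod.ext (intCast_units_inj.mp h₁.1) (Prod.ext h₁.2 h₂.2))

lemma exists_eq_ofLog_of_one_add_pow_five {x : K16} (h : 1 + x ^ 5 = 0) :
    ∃ i, x = ofLog (0, i) := by
  obtain ⟨⟨e, i⟩, rfl⟩ := exists_ofLog_eq (x := x) (by rintro rfl; simp at h)
  obtain rfl : e = 0 := one_add_ofLog_pow_five_eq_zero_iff.mp h
  exact ⟨i, rfl⟩

lemma exists_pointCoords_eq {y z : K16} (h : 1 + y ^ 5 + z ^ 5 = 0) :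
    ∃ x, pointCoords x = ![1, y, z] := by
  by_cases hy : y = 0
  · obtain ⟨i, rfl⟩ := exists_eq_ofLog_of_one_add_pow_five (x := z) (by simpa [hy] using h)
    exact ⟨.inl (1, -i), by simp [pointCoords, hy]⟩
  by_cases hz : z = 0
  · obtain ⟨i, rfl⟩ := exists_eq_ofLog_of_one_add_pow_five (x := y) (by simpa [hz] using h)
    exact ⟨.inl (2, i), by simp [pointCoords, hz]⟩
  obtain ⟨⟨e, i⟩, rfl⟩ := exists_ofLog_eq hy
  obtain ⟨⟨e', j⟩, rfl⟩ := exists_ofLog_eq hz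
  obtain ⟨ε, rfl, rfl⟩ := one_add_ofLog_pow_five_add_eq_zero_iff.mp h
  exact ⟨.inr (ε, i, j), rfl⟩

lemma exists_smul_pointCoords_eq {v : V16} (hv : v ≠ 0)
    (h : v 0 ^ 5 + v 1 ^ 5 + v 2 ^ 5 = 0) : ∃ x, ∃ c : K16, c • pointCoords x = v := by
  by_cases h₀ : v 0 = 0
  · have h₁ : v 1 ≠ 0 := fun h₁ => hv <| by
      ext k
      fin_cases k <;> simp_all
    obtain ⟨i, hi⟩ := exists_eq_ofLog_of_one_add_pow_five (x := v 2 / v 1) (by grind)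
    refine ⟨.inl (0, i), v 1, ?_⟩
    ext k
    fin_cases k <;> simp [pointCoords, ← hi, h₀, mul_div_cancel₀ _ h₁]
  · obtain ⟨x, hx⟩ := exists_pointCoords_eq (y := v 1 / v 0) (z := v 2 / v 0) (by grind)
    refine ⟨x, v 0, ?_⟩
    ext k
    fin_cases k <;> simp [hx, mul_div_cancel₀ _ h₀]

lemma unitalPoint_bijective : Function.Bijective unitalPoint := by
  refine ⟨fun x y h => ?_, fun ⟨P, hP⟩ => ?_⟩
  · obtain ⟨c, hc⟩ := (Projectivization.mk_eq_mk_iff' _ _ _ _ _).mp (congrArg Subtype.val h)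
    exact (eq_of_smul_pointCoords_eq hc).symm
  · induction P using Projectivization.ind with | h v hv =>
    obtain ⟨x, c, hc⟩ := exists_smul_pointCoords_eq hv ((mk_mem_HermitianSet_iff hv).mp hP)
    refine ⟨x, Subtype.ext ((Projectivization.mk_eq_mk_iff' _ _ _ _ _).mpr ⟨c⁻¹, ?_⟩)⟩
    rw [← hc, inv_smul_smul₀]
    rintro rfl
    exact hv (by rw [← hc, zero_smul])

/-! ### Lines -/

/-- The cyclic differences of the logarithms `0`, `p.1`, `p.2` of three homogeneous coordinates; the
`k`-th one does not involve the `k`-th coordinate. -/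
def logRatio {A : Type*} [SubNegMonoid A] (k : Fin 3) (p : A × A) : A := ![p.2 - p.1, -p.2, p.1] k

/-- Index type of the 273 lines of the plane: the sides of the triangle of reference, the other
lines through a vertex of the triangle, and the lines through no vertex. -/
inductive LineCode
  | side (k : Fin 3)
  | pencil (k : Fin 3) (b : ZMod 3) (s : ZMod 5)
  | generic (b c : ZMod 3) (q : ZMod 5 × ZMod 5)

/-- The normalised coefficients of the equation of the line with a given index. -/
def lineCoeffs : LineCode → V16
  | .side k => Pi.single k 1
  | .pencil 0 b s => ![0, 1, ofLog (b, -s)]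
  | .pencil 1 b s => ![ofLog (b, -s), 0, 1]
  | .pencil 2 b s => ![1, ofLog (b, -s), 0]
  | .generic b c q => ![1, ofLog (b, -q.1), ofLog (c, -q.2)]

/-- The incidence relation of points and lines, in terms of the logarithms of coordinates. -/
def Incident : LineCode → PointCode → Prop
  | .side k, .inl (k', _) => k = k'
  | .side _, .inr _ => False
  | .pencil k b s, .inl (k', i) => k = k' ∧ b = 0 ∧ i = s
  | .pencil k b s, .inr (ε, p) => (ε : ZMod 3) = -b ∧ logRatio k p = s
  | .generic b c q, .inl (k, i) => logRatio k (b, c) = 0 ∧ i = logRatio k q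
  | .generic b c q, .inr (ε, p) => p - q ∈ trinomialLogs (b + ε) (c - ε)

instance : ∀ ℓ x, Decidable (Incident ℓ x)
  | .side k, .inl (k', _) => inferInstanceAs (Decidable (k = k'))
  | .side _, .inr _ => inferInstanceAs (Decidable False)
  | .pencil k b s, .inl (k', i) => inferInstanceAs (Decidable (k = k' ∧ b = 0 ∧ i = s))
  | .pencil k b s, .inr (ε, p) =>
    inferInstanceAs (Decidable ((ε : ZMod 3) = -b ∧ logRatio k p = s))
  | .generic b c q, .inl (k, i) =>
    inferInstanceAs (Decidable (logRatio k (b, c) = 0 ∧ i = logRatio k q))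
  | .generic b c q, .inr (ε, p) =>
    inferInstanceAs (Decidable (p - q ∈ trinomialLogs (b + ε) (c - ε)))

lemma one_add_ofLog_eq_zero_iff {a : ZMod 3 × ZMod 5} : 1 + ofLog a = 0 ↔ a = 0 := by
  rw [← ofLog_zero, ofLog_add_ofLog_eq_zero, eq_comm]

open Matrix in
lemma incident_iff {ℓ : LineCode} {x : PointCode} :
    Incident ℓ x ↔ lineCoeffs ℓ ⬝ᵥ pointCoords x = 0 := by
  obtain k | ⟨k, b, s⟩ | ⟨b, c, q⟩ := ℓ <;> obtain ⟨k', i⟩ | ⟨ε, p⟩ := x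
  · fin_cases k <;> fin_cases k' <;> simp [Incident, lineCoeffs, pointCoords, ofLog_ne_zero]
  · fin_cases k <;> simp [Incident, lineCoeffs, pointCoords, ofLog_ne_zero]
  · fin_cases k <;> fin_cases k' <;>
      simp [Incident, lineCoeffs, pointCoords, ofLog_ne_zero, dotProduct, Fin.sum_univ_three,
        ← ofLog_add, ofLog_add_ofLog_eq_zero, one_add_ofLog_eq_zero_iff] <;>
      grind
  · fin_cases k <;>
      simp [Incident, lineCoeffs, pointCoords, logRatio, dotProduct, Fin.sum_univ_three,
        ← ofLog_add, ofLog_add_ofLog_eq_zero, one_add_ofLog_eq_zero_iff] <;>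
      grind
  · fin_cases k' <;>
      simp [Incident, lineCoeffs, pointCoords, logRatio, dotProduct, Fin.sum_univ_three,
        ← ofLog_add, ofLog_add_ofLog_eq_zero, one_add_ofLog_eq_zero_iff] <;>
      grind
  · simp [Incident, lineCoeffs, pointCoords, dotProduct, Fin.sum_univ_three,
        ← ofLog_add, mem_trinomialLogs_iff, neg_add_eq_sub, ← sub_eq_add_neg]

/-! ### The dual code -/

lemma exists_smul_lineCoeffs_eq {v : V16} (hv : v ≠ 0) :
    ∃ ℓ, ∃ c : K16, c ≠ 0 ∧ c • lineCoeffs ℓ = v := by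
  have exists_log {x y : K16} (hx : x ≠ 0) (hy : y ≠ 0) : ∃ a, y = x * ofLog a := by
    obtain ⟨a, ha⟩ := exists_ofLog_eq (div_ne_zero hy hx)
    exact ⟨a, by rw [ha, mul_div_cancel₀ _ hx]⟩
  obtain ⟨x, y, z, rfl⟩ : ∃ x y z, v = ![x, y, z] :=
    ⟨v 0, v 1, v 2, (FinVec.etaExpand_eq v).symm⟩
  by_cases hx : x = 0 <;> by_cases hy : y = 0 <;> by_cases hz : z = 0
  · simp [hx, hy, hz] at hv
  · exact ⟨.side 2, z, hz, by simp [lineCoeffs, hx, hy, Fin.forall_fin_succ, funext_iff]⟩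
  · exact ⟨.side 1, y, hy, by simp [lineCoeffs, hx, hz, Fin.forall_fin_succ, funext_iff]⟩
  · obtain ⟨⟨b, i⟩, rfl⟩ := exists_log hy hz
    exact ⟨.pencil 0 b (-i), y, hy, by simp [lineCoeffs, hx]⟩
  · exact ⟨.side 0, x, hx, by simp [lineCoeffs, hy, hz, Fin.forall_fin_succ, funext_iff]⟩
  · obtain ⟨⟨b, i⟩, rfl⟩ := exists_log hz hx
    exact ⟨.pencil 1 b (-i), z, hz, by simp [lineCoeffs, hy]⟩
  · obtain ⟨⟨b, i⟩, rfl⟩ := exists_log hx hy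
    exact ⟨.pencil 2 b (-i), x, hx, by simp [lineCoeffs, hz]⟩
  · obtain ⟨⟨b, i⟩, rfl⟩ := exists_log hx hy
    obtain ⟨⟨c, j⟩, rfl⟩ := exists_log hx hz
    exact ⟨.generic b c (-i, -j), x, hx, by simp [lineCoeffs]⟩

/-- The points of the Hermitian set on a line. -/
def linePoints (ℓ : LineCode) : Finset PointCode := {x | Incident ℓ x}

/-- The two-dimensional subspace underlying a line. -/
def lineSubmodule (ℓ : LineCode) : Submodule K16 V16 :=
  LinearMap.ker (dotProductEquiv K16 (Fin 3) (lineCoeffs ℓ))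

lemma lineCoeffs_ne_zero (ℓ : LineCode) : lineCoeffs ℓ ≠ 0 := by
  obtain k | ⟨k, b, s⟩ | ⟨b, c, q⟩ := ℓ
  · simp [lineCoeffs]
  · fin_cases k <;> simp [lineCoeffs]
  · simp [lineCoeffs]

lemma finrank_ker_dotProductEquiv {v : V16} (hv : v ≠ 0) :
    Module.finrank K16 (LinearMap.ker (dotProductEquiv K16 (Fin 3) v)) = 2 := by
  have := Module.Dual.finrank_ker_add_one_of_ne_zero
    ((dotProductEquiv K16 (Fin 3)).map_ne_zero_iff.mpr hv)
  rw [Module.finrank_fin_fun] at this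
  exact Nat.succ.inj this

lemma finrank_lineSubmodule (ℓ : LineCode) : Module.finrank K16 (lineSubmodule ℓ) = 2 :=
  finrank_ker_dotProductEquiv (lineCoeffs_ne_zero ℓ)

lemma exists_lineSubmodule_eq {W : Submodule K16 V16} (hW : Module.finrank K16 W = 2) :
    ∃ ℓ, lineSubmodule ℓ = W := by
  have lt_top : W < ⊤ := lt_top_iff_ne_top.mpr fun h => by
    rw [h, finrank_top, Module.finrank_fin_fun] at hW
    exact absurd hW (by norm_num)
  obtain ⟨f, hf, hle⟩ := W.exists_le_ker_of_lt_top lt_top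
  obtain ⟨v, rfl⟩ := (dotProductEquiv K16 (Fin 3)).surjective f
  obtain ⟨ℓ, c, hc, rfl⟩ := exists_smul_lineCoeffs_eq
    ((dotProductEquiv K16 (Fin 3)).map_ne_zero_iff.mp hf)
  refine ⟨ℓ, (Submodule.eq_of_le_of_finrank_eq ?_ ?_).symm⟩
  · rwa [map_smul, LinearMap.ker_smul _ _ hc] at hle
  · rw [hW, finrank_lineSubmodule]

lemma submodule_unitalPoint_le_iff {ℓ : LineCode} {x : PointCode} :
    (unitalPoint x).1.submodule ≤ lineSubmodule ℓ ↔ x ∈ linePoints ℓ := by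
  rw [unitalPoint, Projectivization.submodule_mk, Submodule.span_singleton_le_iff_mem,
    lineSubmodule, LinearMap.mem_ker, dotProductEquiv_apply_apply, ← incident_iff,
    linePoints, Finset.mem_filter_univ]

lemma setOf_submodule_le_lineSubmodule (ℓ : LineCode) :
    {P : ↥HermitianSet | P.1.submodule ≤ lineSubmodule ℓ} = unitalPoint '' linePoints ℓ := by
  ext P
  obtain ⟨x, rfl⟩ := unitalPoint_bijective.surjective P
  rw [unitalPoint_bijective.injective.mem_set_image, Set.mem_ofPred_eq,
    submodule_unitalPoint_le_iff, Finset.mem_coe]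

lemma mem_hermitianBlocks_iff {B : Set ↥HermitianSet} :
    B ∈ hermitianBlocks ↔ ∃ ℓ, (linePoints ℓ).card = 5 ∧ unitalPoint '' linePoints ℓ = B := by
  have ncard_image (ℓ : LineCode) :
      (unitalPoint '' linePoints ℓ).ncard = (linePoints ℓ).card := by
    rw [Set.ncard_image_of_injective _ unitalPoint_bijective.injective, Set.ncard_coe_finset]
  constructor
  · rintro ⟨W, hW, rfl, hcard⟩
    obtain ⟨ℓ, rfl⟩ := exists_lineSubmodule_eq hW
    rw [setOf_submodule_le_lineSubmodule] at hcard ⊢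
    exact ⟨ℓ, ncard_image ℓ ▸ hcard, rfl⟩
  · rintro ⟨ℓ, hcard, rfl⟩
    exact ⟨lineSubmodule ℓ, finrank_lineSubmodule ℓ, (setOf_submodule_le_lineSubmodule ℓ).symm,
      (ncard_image ℓ).trans hcard⟩

/-- The dual code of the design over `GF(5)`: the functions on the points of the Hermitian set
whose sum over every block vanishes. -/
def dualCode : Submodule (ZMod 5) (PointCode → ZMod 5) where
  carrier := {f | ∀ ℓ, (linePoints ℓ).card = 5 → ∑ x ∈ linePoints ℓ, f x = 0}
  zero_mem' := fun _ _ => Finset.sum_const_zero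
  add_mem' := fun hf hg ℓ hℓ => by
    simp only [Pi.add_apply, Finset.sum_add_distrib, hf ℓ hℓ, hg ℓ hℓ, add_zero]
  smul_mem' := fun c f hf ℓ hℓ => by
    simp only [Pi.smul_apply, ← Finset.smul_sum, hf ℓ hℓ, smul_zero]

lemma mem_dualCode_iff {f : PointCode → ZMod 5} :
    f ∈ dualCode ↔ ∀ ℓ, (linePoints ℓ).card = 5 → ∑ x ∈ linePoints ℓ, f x = 0 := Iff.rfl

lemma incidenceMatrix_mulVec_apply {B : ↥hermitianBlocks} {ℓ : LineCode}
    (hB : unitalPoint '' linePoints ℓ = B) (f : PointCode → ZMod 5) :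
    (hermitianIncidenceMatrix.submatrix id unitalPoint).mulVec f B = ∑ x ∈ linePoints ℓ, f x := by
  classical
  simp [Matrix.mulVec, dotProduct, hermitianIncidenceMatrix, ← hB, Set.indicator_apply,
    unitalPoint_bijective.injective.mem_set_image, -Fintype.sum_sum_type]

lemma ker_incidenceMatrix :
    LinearMap.ker (hermitianIncidenceMatrix.submatrix id unitalPoint).mulVecLin = dualCode := by
  ext f
  rw [LinearMap.mem_ker, Matrix.mulVecLin_apply, funext_iff, mem_dualCode_iff]
  constructor
  · intro h ℓ hℓ
    have hB := mem_hermitianBlocks_iff.mpr ⟨ℓ, hℓ, rfl⟩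
    exact (incidenceMatrix_mulVec_apply (B := ⟨_, hB⟩) rfl f).symm.trans (h _)
  · intro h B
    obtain ⟨ℓ, hℓ, hB⟩ := mem_hermitianBlocks_iff.mp B.2
    exact (incidenceMatrix_mulVec_apply hB f).trans (h ℓ hℓ)

lemma rank_hermitianIncidenceMatrix_add_finrank_dualCode :
    hermitianIncidenceMatrix.rank + Module.finrank (ZMod 5) dualCode = 65 := by
  have : Fact (Nat.Prime 5) := ⟨Nat.prime_five⟩
  rw [← Matrix.rank_submatrix hermitianIncidenceMatrix (Equiv.refl _)
    (Equiv.ofBijective _ unitalPoint_bijective), ← ker_incidenceMatrix]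
  refine (LinearMap.finrank_range_add_finrank_ker _).trans ?_
  simp [PointCode]

/-! ### Line sums -/

section LineSums

variable {M : Type*} [AddCommMonoid M]

/-- The `x`-th solution `p` of `logRatio k p = s`. -/
def pencilPoint (k : Fin 3) (s x : ZMod 5) : ZMod 5 × ZMod 5 := ![(x, x + s), (x, -s), (s, x)] k

lemma sum_ite_logRatio_eq (g : ZMod 5 × ZMod 5 → M) (k : Fin 3) (s : ZMod 5) :
    ∑ p, (if logRatio k p = s then g p else 0) = ∑ x, g (pencilPoint k s x) := by
  rw [Fintype.sum_prod_type]
  match k with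
  | 0 =>
    change ∑ x, ∑ y, (if y - x = s then g (x, y) else 0) = ∑ x, g (x, x + s)
    simp [sub_eq_iff_eq_add']
  | 1 =>
    change ∑ x, ∑ y, (if -y = s then g (x, y) else 0) = ∑ x, g (x, -s)
    simp [neg_eq_iff_eq_neg]
  | 2 =>
    change ∑ x, ∑ y, (if x = s then g (x, y) else 0) = ∑ x, g (s, x)
    rw [Finset.sum_comm]
    simp

lemma sum_linePoints (f : PointCode → M) (ℓ : LineCode) :
    ∑ x ∈ linePoints ℓ, f x =
      ∑ k, ∑ i, (if Incident ℓ (.inl (k, i)) then f (.inl (k, i)) else 0) +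
        ∑ ε, ∑ p, (if Incident ℓ (.inr (ε, p)) then f (.inr (ε, p)) else 0) := by
  rw [linePoints, Finset.sum_filter, Fintype.sum_sum_type, Fintype.sum_prod_type,
    Fintype.sum_prod_type]

lemma sum_linePoints_side (f : PointCode → M) (k : Fin 3) :
    ∑ x ∈ linePoints (.side k), f x = ∑ i, f (.inl (k, i)) := by
  rw [sum_linePoints]
  change ∑ k', ∑ i, (if k = k' then f (.inl (k', i)) else 0) +
    ∑ ε : ℤˣ, ∑ p : ZMod 5 × ZMod 5, (if False then f (.inr (ε, p)) else 0) = _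
  rw [Finset.sum_comm]
  simp

lemma sum_linePoints_pencil (f : PointCode → M) (k : Fin 3) (ε : ℤˣ) (s : ZMod 5) :
    ∑ x ∈ linePoints (.pencil k (-ε) s), f x = ∑ x, f (.inr (ε, pencilPoint k s x)) := by
  have ne_zero : ∀ ε : ℤˣ, (ε : ZMod 3) ≠ 0 := by decide
  rw [sum_linePoints, ← sum_ite_logRatio_eq fun p => f (.inr (ε, p))]
  simp [Incident, ne_zero, ite_and, intCast_units_inj, -UnitsInt.univ]

lemma sum_linePoints_generic (f : PointCode → M) (b c : ZMod 3) (q : ZMod 5 × ZMod 5) :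
    ∑ x ∈ linePoints (.generic b c q), f x =
      ∑ k, (if logRatio k (b, c) = 0 then f (.inl (k, logRatio k q)) else 0) +
        ∑ ε : ℤˣ, ∑ t ∈ trinomialLogs (b + ε) (c - ε), f (.inr (ε, q + t)) := by
  rw [sum_linePoints]
  congr 1
  · change ∑ k, ∑ i, (if logRatio k (b, c) = 0 ∧ i = logRatio k q then f (.inl (k, i)) else 0) = _
    simp [ite_and]
  · refine Fintype.sum_congr _ _ fun ε => ?_
    rw [← Equiv.sum_comp (Equiv.addLeft q)]
    simp [Incident]

end LineSums

lemma card_linePoints_side (k : Fin 3) : (linePoints (.side k)).card = 5 := by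
  rw [Finset.card_eq_sum_ones, sum_linePoints_side]
  rfl

lemma card_linePoints_pencil_zero (k : Fin 3) (s : ZMod 5) :
    (linePoints (.pencil k 0 s)).card = 1 := by
  have ne_zero : ∀ ε : ℤˣ, (ε : ZMod 3) ≠ 0 := by decide
  rw [Finset.card_eq_sum_ones, sum_linePoints]
  simp [Incident, ne_zero, ite_and, -UnitsInt.univ]

lemma card_linePoints_pencil (k : Fin 3) (ε : ℤˣ) (s : ZMod 5) :
    (linePoints (.pencil k (-ε) s)).card = 5 := by
  rw [Finset.card_eq_sum_ones, sum_linePoints_pencil]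
  rfl

/-- The types `(b, c)` of the generic lines that meet the side `x_k = 0` of the triangle of
reference, and no other side, in a point of the Hermitian set are `± sideType k`. -/
def sideType (k : Fin 3) : ZMod 3 × ZMod 3 := ![(-1, -1), (1, 0), (0, 1)] k

/-- A generic line `(b, c, q)` of type `(b, c) = ε • sideType k` meets the Hermitian set in a point
on a side and in the points with logarithms `q ± direction ε (k + 1)` and `q ± direction ε k`. -/
def direction (ε : ℤˣ) (k : Fin 3) : ZMod 5 × ZMod 5 :=
  (if ε = 1 then 1 else 2 : ZMod 5) • (![(1, 2), (2, 1), (1, -1)] k : ZMod 5 × ZMod 5)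

lemma card_linePoints_generic_eq_five_iff {b c : ZMod 3} {q : ZMod 5 × ZMod 5} :
    (linePoints (.generic b c q)).card = 5 ↔
      (b, c) = 0 ∨ ∃ ε : ℤˣ, ∃ k, (b, c) = ε • sideType k := by
  rw [Finset.card_eq_sum_ones, sum_linePoints_generic]
  simp only [← Finset.card_eq_sum_ones]
  revert b c
  decide

section GenericSums

variable {M : Type*} [AddCommMonoid M] (f : PointCode → M)

lemma sum_units_int (ε : ℤˣ) (g : ℤˣ → M) : ∑ δ, g δ = g ε + g (-ε) := by
  obtain rfl | rfl := Int.units_eq_one_or ε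
  · simp
  · simp [add_comm]

lemma sum_linePoints_generic_zero (q : ZMod 5 × ZMod 5) :
    ∑ x ∈ linePoints (.generic 0 0 q), f x =
      ∑ k, f (.inl (k, logRatio k q)) + (f (.inr (1, q)) + f (.inr (-1, q))) := by
  have logRatio_zero (k) : logRatio k ((0, 0) : ZMod 3 × ZMod 3) = 0 := by revert k; decide
  have logs (ε : ℤˣ) : trinomialLogs (0 + ε) (0 - ε) = {0} := by revert ε; decide
  simp only [sum_linePoints_generic, logRatio_zero, if_true, logs, Finset.sum_singleton, add_zero,
    sum_units_int 1]

lemma sum_linePoints_generic_sideType (ε : ℤˣ) (k : Fin 3) (q : ZMod 5 × ZMod 5) :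
    ∑ x ∈ linePoints (.generic (ε • sideType k).1 (ε • sideType k).2 q), f x =
      f (.inl (k, logRatio k q)) +
        ((f (.inr (ε, q + direction ε (k + 1))) + f (.inr (ε, q - direction ε (k + 1)))) +
          (f (.inr (-ε, q + direction ε k)) + f (.inr (-ε, q - direction ε k)))) := by
  have logRatio_eq_zero_iff (k') : logRatio k' (ε • sideType k) = 0 ↔ k' = k := by
    revert k k' ε; decide
  have logs : trinomialLogs ((ε • sideType k).1 + ε) ((ε • sideType k).2 - ε) =
        {direction ε (k + 1), -direction ε (k + 1)} ∧
      trinomialLogs ((ε • sideType k).1 + (-ε : ℤˣ)) ((ε • sideType k).2 - (-ε : ℤˣ)) =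
        {direction ε k, -direction ε k} := by
    clear logRatio_eq_zero_iff
    revert ε k; decide
  have ne_neg : ∀ ε k, direction ε k ≠ -direction ε k := by decide
  rw [sum_linePoints_generic, sum_units_int ε, logs.1, logs.2, Finset.sum_pair (ne_neg _ _),
    Finset.sum_pair (ne_neg _ _)]
  simp only [Prod.mk.eta, logRatio_eq_zero_iff, Finset.sum_ite_eq', Finset.mem_univ, if_true,
    ← sub_eq_add_neg]

end GenericSums

lemma mem_dualCode_iff_equations {f : PointCode → ZMod 5} :
    f ∈ dualCode ↔
      (∀ k, ∑ i, f (.inl (k, i)) = 0) ∧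
      (∀ k s, ∀ ε : ℤˣ, ∑ x, f (.inr (ε, pencilPoint k s x)) = 0) ∧
      (∀ q, ∑ k, f (.inl (k, logRatio k q)) + (f (.inr (1, q)) + f (.inr (-1, q))) = 0) ∧
      ∀ ε k q, f (.inl (k, logRatio k q)) +
        ((f (.inr (ε, q + direction ε (k + 1))) + f (.inr (ε, q - direction ε (k + 1)))) +
          (f (.inr (-ε, q + direction ε k)) + f (.inr (-ε, q - direction ε k)))) = 0 := by
  simp only [← sum_linePoints_side, ← sum_linePoints_pencil, ← sum_linePoints_generic_zero,
    ← sum_linePoints_generic_sideType]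
  rw [mem_dualCode_iff]
  constructor
  · exact fun h => ⟨fun k => h _ (card_linePoints_side k),
      fun k s ε => h _ (card_linePoints_pencil k ε s),
      fun q => h _ (card_linePoints_generic_eq_five_iff.mpr (.inl rfl)),
      fun ε k q => h _ (card_linePoints_generic_eq_five_iff.mpr (.inr ⟨ε, k, rfl⟩))⟩
  · rintro ⟨side, pencil, generic_zero, generic_sideType⟩ (k | ⟨k, b, s⟩ | ⟨b, c, q⟩) hcard
    · exact side k
    · obtain rfl | ⟨ε, rfl⟩ : b = 0 ∨ ∃ ε : ℤˣ, b = -ε :=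
        (by decide : ∀ b : ZMod 3, b = 0 ∨ ∃ ε : ℤˣ, b = -ε) b
      · rw [card_linePoints_pencil_zero] at hcard
        exact absurd hcard (by norm_num)
      · exact pencil k s ε
    · obtain h | ⟨ε, k, h⟩ := card_linePoints_generic_eq_five_iff.mp hcard <;>
        obtain ⟨rfl, rfl⟩ := Prod.mk.inj h
      · exact generic_zero q
      · exact generic_sideType ε k q

/-! ### Second differences -/

section Rigidity

open fwdDiff

section Periodic

variable {A B : Type*} [AddCommGroup A] {f : A → B} {u v : A}

lemma eq_of_periodic_of_span {n : ℕ} [NeZero n] [Module (ZMod n) A]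
    (hu : Function.Periodic f u) (hv : Function.Periodic f v)
    (hspan : ∀ p, ∃ i j : ZMod n, i • u + j • v = p) (p : A) : f p = f 0 := by
  obtain ⟨i, j, rfl⟩ := hspan p
  rw [← ZMod.natCast_zmod_val i, ← ZMod.natCast_zmod_val j, Nat.cast_smul_eq_nsmul,
    Nat.cast_smul_eq_nsmul, hv.nsmul j.val, ← zero_add (i.val • u), hu.nsmul i.val]

variable [AddCommGroup B]

lemma fwdDiff_eq_zero_iff_periodic : (∀ p, Δ_[u] f p = 0) ↔ Function.Periodic f u :=
  forall_congr' fun _ => sub_eq_zero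

lemma fwdDiff_periodic (h : Function.Periodic f u) : Function.Periodic (Δ_[v] f) u := fun p => by
  simp only [fwdDiff, add_right_comm p u v, h _]

lemma fwdDiff_sub_periodic (h : ∀ p, f (p + u) + f (p - u) = f (p + v) + f (p - v)) :
    Function.Periodic (Δ_[u - v] f) (u + v) := fun p => by
  have := h (p + u)
  rw [add_sub_cancel_right, add_comm, ← sub_eq_sub_iff_add_eq_add] at this
  simp only [fwdDiff]
  rw [show p + (u + v) + (u - v) = p + u + u by abel, ← add_assoc p u v, ← add_sub_assoc p u v]
  grind

lemma fwdDiff_add_periodic (h : ∀ p, f (p + u) + f (p - u) = f (p + v) + f (p - v)) :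
    Function.Periodic (Δ_[u + v] f) (u - v) := by
  simpa only [sub_neg_eq_add, ← sub_eq_add_neg] using fwdDiff_sub_periodic (u := u) (v := -v)
    fun p => by rw [h, sub_neg_eq_add, ← sub_eq_add_neg, add_comm]

end Periodic

lemma eq_zero_of_fwdDiff_fwdDiff_eq_zero {n : ℕ} [NeZero n] {A : Type*} [AddCommGroup A]
    {g : ZMod n → A} (h : ∀ x, Δ_[1] (Δ_[1] g) x = 0) (h₀ : g 0 = 0) (h₁ : g 1 = 0) (x : ZMod n) :
    g x = 0 := by
  have apply_eq {g : ZMod n → A} (hg : Function.Periodic g 1) (x : ZMod n) : g x = g 0 := by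
    simpa using hg.nat_mul_eq x.val
  have periodic : Function.Periodic g 1 := fwdDiff_eq_zero_iff_periodic.mp fun x => by
    rw [apply_eq (fwdDiff_eq_zero_iff_periodic.mp h) x, fwdDiff, zero_add, h₀, h₁, sub_zero]
  rw [apply_eq periodic, h₀]

lemma eq_zero_of_secondDifferences_eq {B : Type*} [AddCommGroup B] {F : ZMod 5 × ZMod 5 → B}
    (h₁ : ∀ p, F (p + (1, 2)) + F (p - (1, 2)) = F (p + (1, -1)) + F (p - (1, -1)))
    (h₂ : ∀ p, F (p + (2, 1)) + F (p - (2, 1)) = F (p + (1, -1)) + F (p - (1, -1)))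
    (h₀₀ : F 0 = 0) (h₃₀ : F (3, 0) = 0) (h₀₃ : F (0, 3) = 0) (h₃₃ : F (3, 3) = 0)
    (p : ZMod 5 × ZMod 5) : F p = 0 := by
  have periodic₁ : Function.Periodic (Δ_[(3, 0)] F) (1, 2) := by
    have := fwdDiff_add_periodic h₂
    rwa [show ((2, 1) + (1, -1) : ZMod 5 × ZMod 5) = (3, 0) by decide,
      show ((2, 1) - (1, -1) : ZMod 5 × ZMod 5) = (1, 2) by decide] at this
  have periodic₂ : Function.Periodic (Δ_[(0, 3)] F) (2, 1) := by
    have := fwdDiff_sub_periodic h₁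
    rwa [show ((1, 2) - (1, -1) : ZMod 5 × ZMod 5) = (0, 3) by decide,
      show ((1, 2) + (1, -1) : ZMod 5 × ZMod 5) = (2, 1) by decide] at this
  have comm : Δ_[(0, 3)] (Δ_[(3, 0)] F) = Δ_[(3, 0)] (Δ_[(0, 3)] F) := by
    ext p
    simp only [fwdDiff, add_right_comm p]
    abel
  have mixed (p) : Δ_[(0, 3)] (Δ_[(3, 0)] F) p = 0 := by
    rw [eq_of_periodic_of_span (n := 5) (u := (1, 2)) (v := (2, 1)) (fwdDiff_periodic periodic₁)
      (comm ▸ fwdDiff_periodic periodic₂) (by decide) p]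
    simp [fwdDiff, h₀₀, h₃₀, h₀₃, h₃₃]
  have diff₁ (p) : Δ_[(3, 0)] F p = 0 := by
    rw [eq_of_periodic_of_span (n := 5) (u := (0, 3)) (v := (1, 2))
      (fwdDiff_eq_zero_iff_periodic.mp mixed) periodic₁ (by decide) p]
    simp [fwdDiff, h₀₀, h₃₀]
  have diff₂ (p) : Δ_[(0, 3)] F p = 0 := by
    rw [eq_of_periodic_of_span (n := 5) (u := (3, 0)) (v := (2, 1))
      (fwdDiff_eq_zero_iff_periodic.mp (comm ▸ mixed)) periodic₂ (by decide) p]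
    simp [fwdDiff, h₀₀, h₀₃]
  rw [eq_of_periodic_of_span (n := 5) (u := (3, 0)) (v := (0, 3))
    (fwdDiff_eq_zero_iff_periodic.mp diff₁) (fwdDiff_eq_zero_iff_periodic.mp diff₂) (by decide) p]
  exact h₀₀

/-! ### Words are determined by 13 values -/

lemma logRatio_add {A : Type*} [AddCommGroup A] (k : Fin 3) (p q : A × A) :
    logRatio k (p + q) = logRatio k p + logRatio k q := by
  fin_cases k
  · exact add_sub_add_comm ..
  · exact neg_add ..
  · rfl

lemma logRatio_sub {A : Type*} [AddCommGroup A] (k : Fin 3) (p q : A × A) :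
    logRatio k (p - q) = logRatio k p - logRatio k q := by
  rw [eq_sub_iff_add_eq, ← logRatio_add, sub_add_cancel]

lemma sum_antipodal_eq_fwdDiff_fwdDiff {A : Type*} [AddCommGroup A] {g : ZMod 5 → A}
    (hg : ∑ i, g i = 0) (j : Fin 3) (x : ZMod 5) :
    ∑ k, (g (x + logRatio j (direction 1 k)) + g (x - logRatio j (direction 1 k))) =
      Δ_[1] (Δ_[1] g) (x - 1) + g x := by
  have sum_translates : g x + g (x + 1) + g (x + 2) + g (x - 2) + g (x - 1) = 0 := by
    have := (Fin.sum_univ_five _).symm.trans ((Equiv.sum_comp (Equiv.addLeft x) g).trans hg)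
    change g (x + 0) + g (x + 1) + g (x + 2) + g (x + -2) + g (x + -1) = 0 at this
    simpa only [add_zero, ← sub_eq_add_neg] using this
  let P (y : ZMod 5) := g (x + y) + g (x - y)
  have P_neg (y) : P (-y) = P y := by
    simp only [P, sub_neg_eq_add, ← sub_eq_add_neg, add_comm]
  have sum_P : ∑ k, P (logRatio j (direction 1 k)) = P 1 + P 1 + P 2 := by
    rw [Fin.sum_univ_three]
    match j with
    | 0 =>
      change P 1 + P (-1) + P (-2) = _
      rw [P_neg, P_neg]
    | 1 =>
      change P (-2) + P (-1) + P 1 = _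
      rw [P_neg, P_neg, add_rotate]
    | 2 =>
      change P 1 + P 2 + P 1 = _
      rw [add_right_comm]
  refine sum_P.trans ?_
  simp only [P, fwdDiff, sub_add_cancel]
  rw [← sub_eq_zero, ← sum_translates]
  abel

lemma sum_fwdDiff_fwdDiff_sides_eq_zero {f : PointCode → ZMod 5} (hf : f ∈ dualCode)
    (q : ZMod 5 × ZMod 5) :
    ∑ j, Δ_[1] (Δ_[1] fun i => f (.inl (j, i))) (logRatio j q - 1) = 0 := by
  obtain ⟨side, -, generic_zero, generic_sideType⟩ := mem_dualCode_iff_equations.mp hf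
  set S : ZMod 5 × ZMod 5 → ZMod 5 := fun q => ∑ j, f (.inl (j, logRatio j q)) with hS
  have S_eq : S q = ∑ k, (S (q + direction 1 k) + S (q - direction 1 k)) := by
    have sum_generic : S q + ∑ k, ((f (.inr (1, q + direction 1 (k + 1))) +
          f (.inr (1, q - direction 1 (k + 1)))) + (f (.inr (-1, q + direction 1 k)) +
          f (.inr (-1, q - direction 1 k)))) = 0 := by
      rw [hS, ← Finset.sum_add_distrib]
      exact Finset.sum_eq_zero fun k _ => generic_sideType 1 k q
    have shift := Equiv.sum_comp (Equiv.addRight 1) fun k =>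
      f (.inr (1, q + direction 1 k)) + f (.inr (1, q - direction 1 k))
    simp only [Equiv.coe_addRight] at shift
    rw [Finset.sum_add_distrib, shift, ← Finset.sum_add_distrib] at sum_generic
    rw [eq_neg_of_add_eq_zero_left sum_generic, ← Finset.sum_neg_distrib]
    refine Finset.sum_congr rfl fun k _ => ?_
    linear_combination -generic_zero (q + direction 1 k) - generic_zero (q - direction 1 k)
  rw [← add_eq_right (b := S q)]
  nth_rw 2 [S_eq]
  simp only [hS, ← Finset.sum_add_distrib, logRatio_add, logRatio_sub]
  rw [Finset.sum_comm]
  exact Finset.sum_congr rfl fun j _ => (sum_antipodal_eq_fwdDiff_fwdDiff (side j) j _).symm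

/-- An information set of the dual code: its words are determined by their values on these
points. -/
def informationSet : Finset PointCode :=
  {.inl (2, 0), .inl (2, 1), .inl (2, 2), .inl (2, 3), .inl (1, 0), .inl (1, 1), .inl (1, 2),
    .inl (0, 0), .inl (0, 1), .inr (1, 0, 0), .inr (1, 3, 0), .inr (1, 0, 3), .inr (1, 3, 3)}

section InformationSet

variable {f : PointCode → ZMod 5} (hf : f ∈ dualCode) (h : ∀ x ∈ informationSet, f x = 0)
include hf h

lemma apply_inl_eq_zero (k : Fin 3) (i : ZMod 5) : f (.inl (k, i)) = 0 := by
  have zero₂ (i) : f (.inl (2, i)) = 0 := by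
    have sum_eq_zero := (Fin.sum_univ_five _).symm.trans ((mem_dualCode_iff_equations.mp hf).1 2)
    change f (.inl (2, 0)) + f (.inl (2, 1)) + f (.inl (2, 2)) + f (.inl (2, 3)) +
      f (.inl (2, 4)) = 0 at sum_eq_zero
    rw [h _ (by decide), h _ (by decide), h _ (by decide), h _ (by decide), zero_add, zero_add,
      zero_add, zero_add] at sum_eq_zero
    fin_cases i
    exacts [h _ (by decide), h _ (by decide), h _ (by decide), h _ (by decide), sum_eq_zero]
  have sum_fwdDiff (x y : ZMod 5) : Δ_[1] (Δ_[1] fun i => f (.inl (0, i))) x +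
      Δ_[1] (Δ_[1] fun i => f (.inl (1, i))) y = 0 := by
    have := sum_fwdDiff_fwdDiff_sides_eq_zero hf (-x - y - 2, -y - 1)
    rw [Fin.sum_univ_three, show logRatio 0 (-x - y - 2, -y - 1) - 1 = x by simp [logRatio]; ring,
      show logRatio 1 (-x - y - 2, -y - 1) - 1 = y by simp [logRatio]] at this
    simpa only [fwdDiff, zero₂, sub_zero, add_zero] using this
  have fwdDiff_zero : Δ_[1] (Δ_[1] fun i => f (.inl (1, i))) 0 = 0 := by
    change f (.inl (1, 2)) - f (.inl (1, 1)) - (f (.inl (1, 1)) - f (.inl (1, 0))) = 0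
    rw [h _ (by decide), h _ (by decide), h _ (by decide), sub_self]
  have fwdDiff₀ (x) : Δ_[1] (Δ_[1] fun i => f (.inl (0, i))) x = 0 := by
    simpa only [fwdDiff_zero, add_zero] using sum_fwdDiff x 0
  have fwdDiff₁ (y) : Δ_[1] (Δ_[1] fun i => f (.inl (1, i))) y = 0 := by
    simpa only [fwdDiff₀, zero_add] using sum_fwdDiff 0 y
  match k with
  | 0 => exact eq_zero_of_fwdDiff_fwdDiff_eq_zero fwdDiff₀ (h _ (by decide)) (h _ (by decide)) i
  | 1 => exact eq_zero_of_fwdDiff_fwdDiff_eq_zero fwdDiff₁ (h _ (by decide)) (h _ (by decide)) i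
  | 2 => exact zero₂ i

lemma apply_inr_eq_zero (ε : ℤˣ) (p : ZMod 5 × ZMod 5) : f (.inr (ε, p)) = 0 := by
  obtain ⟨-, -, generic_zero, generic_sideType⟩ := mem_dualCode_iff_equations.mp hf
  simp only [apply_inl_eq_zero hf h, Finset.sum_const_zero, zero_add]
    at generic_zero generic_sideType
  have neg_one (p) : f (.inr (-1, p)) = -f (.inr (1, p)) :=
    eq_neg_of_add_eq_zero_right (generic_zero p)
  have second_differences (k : Fin 3) (p) :
      f (.inr (1, p + direction 1 (k + 1))) + f (.inr (1, p - direction 1 (k + 1))) =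
        f (.inr (1, p + direction 1 k)) + f (.inr (1, p - direction 1 k)) := by
    have := generic_sideType 1 k p
    rw [neg_one, neg_one] at this
    linear_combination this
  have one : ∀ p, f (.inr (1, p)) = 0 := by
    refine eq_zero_of_secondDifferences_eq (fun p => ?_) (fun p => ?_) (h _ (by decide))
      (h _ (by decide)) (h _ (by decide)) (h _ (by decide))
    · exact second_differences 2 p
    · exact (second_differences 1 p).symm
  obtain rfl | rfl := Int.units_eq_one_or ε
  · exact one p
  · rw [neg_one, one, neg_zero]

lemma eq_zero_of_mem_dualCode : f = 0 := by
  ext (⟨k, i⟩ | ⟨ε, p⟩)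
  · exact apply_inl_eq_zero hf h k i
  · exact apply_inr_eq_zero hf h ε p

end InformationSet

end Rigidity

lemma finrank_dualCode_le : Module.finrank (ZMod 5) dualCode ≤ 13 := by
  have : Fact (Nat.Prime 5) := ⟨Nat.prime_five⟩
  have restrict_injective : Function.Injective
      (LinearMap.funLeft (ZMod 5) (ZMod 5) ((↑) : informationSet → PointCode) ∘ₗ
        dualCode.subtype) := by
    refine (injective_iff_map_eq_zero _).mpr fun f hf => Subtype.ext ?_
    exact eq_zero_of_mem_dualCode f.2 fun x hx => congrFun hf ⟨x, hx⟩
  have := LinearMap.finrank_le_finrank_of_injective restrict_injective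
  rwa [Module.finrank_fintype_fun_eq_card, Fintype.card_coe] at this

/-! ### A basis of the dual code -/

/-- The function on the points with values `g` on the sides of the triangle of reference and, off
the triangle, with value `± Φ` up to the term that the lines of type `(0, 0)` force on it. -/
def word (g : Fin 3 → ZMod 5 → ZMod 5) (Φ : ZMod 5 × ZMod 5 → ZMod 5) : PointCode → ZMod 5
  | .inl (k, i) => g k i
  | .inr (ε, p) => ε * Φ p + 2 * ∑ k, g k (logRatio k p)

lemma word_mem_dualCode {g : Fin 3 → ZMod 5 → ZMod 5} {Φ : ZMod 5 × ZMod 5 → ZMod 5}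
    (side : ∀ k, ∑ i, g k i = 0) (pencil : ∀ k s, ∑ x, Φ (pencilPoint k s x) = 0)
    (generic : ∀ k q, ∀ ε : ℤˣ, g k (logRatio k q) +
      ε * (Φ (q + direction ε (k + 1)) + Φ (q - direction ε (k + 1))
        - (Φ (q + direction ε k) + Φ (q - direction ε k))) +
      2 * ∑ j, (g j (logRatio j q + logRatio j (direction ε (k + 1)))
        + g j (logRatio j q - logRatio j (direction ε (k + 1)))
        + (g j (logRatio j q + logRatio j (direction ε k))
          + g j (logRatio j q - logRatio j (direction ε k)))) = 0) :
    word g Φ ∈ dualCode := by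
  have five : (5 : ZMod 5) = 0 := rfl
  have logRatio_bijective {j k : Fin 3} (h : j ≠ k) (s : ZMod 5) :
      Function.Bijective fun x => logRatio j (pencilPoint k s x) := by
    revert j k s; decide
  have logRatio_self : ∀ k s x, logRatio k (pencilPoint k s x) = s := by decide
  have sum_side (j k s) : ∑ x, g j (logRatio j (pencilPoint k s x)) = 0 := by
    by_cases h : j = k
    · simp [h, logRatio_self, five]
    · exact ((logRatio_bijective h s).sum_comp (g j)).trans (side j)
  refine mem_dualCode_iff_equations.mpr ⟨side, fun k s ε => ?_, fun q => ?_, fun ε k q => ?_⟩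
  · simp only [word, Finset.sum_add_distrib, ← Finset.mul_sum, pencil]
    rw [Finset.sum_comm]
    simp only [sum_side, Finset.sum_const_zero, mul_zero, add_zero]
  · simp only [word, Units.val_one, Units.val_neg, Int.cast_neg, Int.cast_one]
    linear_combination (∑ k, g k (logRatio k q)) * five
  · simp only [word, Units.val_neg, Int.cast_neg]
    refine Eq.trans ?_ (generic k q ε)
    simp only [Finset.sum_add_distrib, logRatio_add, logRatio_sub]
    ring

/-- Index type of a basis of the dual code: four words vanishing on the triangle of reference, and
words whose values on the sides are constant, linear, quadratic and cubic. -/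
abbrev WordIndex := Fin 4 ⊕ Fin 3 ⊕ Fin 3 ⊕ Fin 2 ⊕ Unit

/-- The values of the basis words of the dual code on the sides of the triangle of reference. By
`sum_fwdDiff_fwdDiff_sides_eq_zero` they are polynomials of degree at most `3` whose cubic
coefficients agree and whose quadratic coefficients add up to `0`. -/
def sideValues : WordIndex → Fin 3 → ZMod 5 → ZMod 5
  | .inl _ => 0
  | .inr (.inl k) => Pi.single k 1
  | .inr (.inr (.inl k)) => Pi.single k id
  | .inr (.inr (.inr (.inl k))) =>
    Pi.single k.castSucc (fun x => x ^ 2) - Pi.single k.succ (fun x => x ^ 2)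
  | .inr (.inr (.inr (.inr _))) => fun _ x => x ^ 3

/-- The polynomials `Φ` for which `word (sideValues i) Φ` are the basis words of the dual code. -/
def potential : WordIndex → ZMod 5 × ZMod 5 → ZMod 5
  | .inl i => fun p => ![1, p.1, p.2, p.1 ^ 2 - p.1 * p.2 + p.2 ^ 2] i
  | .inr (.inl k) => fun p => 3 * logRatio k p * (logRatio (k + 1) p - logRatio (k + 2) p)
  | .inr (.inr (.inl k)) => fun p =>
    logRatio (k + 1) p * logRatio (k + 2) p * (logRatio (k + 1) p - logRatio (k + 2) p)
  | .inr (.inr (.inr (.inl k))) => fun p =>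
    logRatio 0 p * logRatio 1 p * logRatio 2 p * logRatio (k.castSucc + 2) p
  | .inr (.inr (.inr (.inr _))) => fun p =>
    logRatio 1 p ^ 2 * logRatio 2 p ^ 2 * (logRatio 1 p - logRatio 2 p)

/-- The basis words of the dual code. -/
def dualWord (i : WordIndex) : PointCode → ZMod 5 := word (sideValues i) (potential i)

lemma dualWord_mem (i : WordIndex) : dualWord i ∈ dualCode := by
  refine word_mem_dualCode ?_ ?_ ?_ <;> revert i <;> decide +kernel

lemma coeffs_eq_zero_of_cubic_eq_zero {a b c d : ZMod 5}
    (h : ∀ x, a + b * x + c * x ^ 2 + d * x ^ 3 = 0) : a = 0 ∧ b = 0 ∧ c = 0 ∧ d = 0 := by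
  have h₀ := h 0
  have h₁ := h 1
  have h₂ := h 2
  have h₃ := h 3
  grind

lemma dualWord_linearIndependent : LinearIndependent (ZMod 5) dualWord := by
  rw [Fintype.linearIndependent_iff]
  intro c hc
  have side (k x) : c (.inr (.inl k)) + c (.inr (.inr (.inl k))) * x +
      (![c (.inr (.inr (.inr (.inl 0)))),
        c (.inr (.inr (.inr (.inl 1)))) - c (.inr (.inr (.inr (.inl 0)))),
        -c (.inr (.inr (.inr (.inl 1))))] k) * x ^ 2 +
      c (.inr (.inr (.inr (.inr ())))) * x ^ 3 = 0 := by
    have := congrFun hc (.inl (k, x))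
    fin_cases k <;>
      simp [dualWord, word, sideValues, Pi.single_apply, ite_apply] at this ⊢ <;>
      linear_combination this
  choose constant linear quadratic cubic using fun k => coeffs_eq_zero_of_cubic_eq_zero (side k)
  have quadratic₀ : c (.inr (.inr (.inr (.inl 0)))) = 0 := quadratic 0
  have quadratic₁ : c (.inr (.inr (.inr (.inl 1)))) = 0 := neg_eq_zero.mp (quadratic 2)
  have interior (p : ZMod 5 × ZMod 5) : c (.inl 0) + c (.inl 1) * p.1 + c (.inl 2) * p.2 +
      c (.inl 3) * (p.1 ^ 2 - p.1 * p.2 + p.2 ^ 2) = 0 := by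
    have := congrFun hc (.inr (1, p))
    simpa [Fin.sum_univ_four, Fin.sum_univ_three, dualWord, word, sideValues, potential, constant,
      linear, quadratic₀, quadratic₁, cubic 0] using this
  have interior₀ := interior (0, 0)
  have interior₁ := interior (1, 0)
  have interior₂ := interior (-1, 0)
  have interior₃ := interior (0, 1)
  rintro (i | i | i | i | _)
  · fin_cases i <;> grind
  · exact constant i
  · exact linear i
  · fin_cases i
    exacts [quadratic₀, quadratic₁]
  · exact cubic 0

lemma finrank_dualCode : Module.finrank (ZMod 5) dualCode = 13 := by
  have : Fact (Nat.Prime 5) := ⟨Nat.prime_five⟩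
  have independent :
      LinearIndependent (ZMod 5) fun i => (⟨dualWord i, dualWord_mem i⟩ : dualCode) :=
    .of_comp dualCode.subtype dualWord_linearIndependent
  exact le_antisymm finrank_dualCode_le independent.fintype_card_le_finrank

/-- The 5-rank of the Hermitian unital design of order 4 is exactly 52: its block–point
incidence matrix has rank 52 over the field `GF(5)`. -/
theorem hermitian_unital_design_five_rank :
    hermitianIncidenceMatrix.rank = 52 := by
  have := rank_hermitianIncidenceMatrix_add_finrank_dualCode
  rw [finrank_dualCode] at this
  omega
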